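/- The function f(x) = (1/π)·sin(πx/(1+x))·x^{-x/(1+x)} on (0,∞) is a probability density; moreover ∫₀^∞ f(x)/(1+x) dx = e^{-1}, and for every λ > 0 with λ ≠ 1, ∫₀^∞ f(x)/(1+λx) dx = λ^{-λ/(λ−1)}. (Proposition 4.1: f is the density of the Dirichlet mean M₁(F_W) for W a ratio of independent exponentials, characterized by its order-1 Cauchy–Stieltjes transform e^{-ψ_{F_W}(λ)} with ψ_{F_W}(λ) = λ log(λ)/(λ−1).) -/

import Mathlib

open MeasureTheory

namespace MeanRatio
open Complex Filter Topology Set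

noncomputable def phi (w : ℂ) : ℂ := dslope Complex.exp 0 w
noncomputable def H (w : ℂ) : ℂ := Complex.exp (-(Complex.exp w / phi w))
def strip : Set ℂ := {w : ℂ | |w.im| < 2 * Real.pi}
def Lp : Filter ℂ := comap Complex.re atTop ⊓ 𝓟 {w : ℂ | |w.im| ≤ Real.pi}
def Lm : Filter ℂ := comap Complex.re atBot ⊓ 𝓟 {w : ℂ | |w.im| ≤ Real.pi}

lemma strip_open : IsOpen strip :=
  isOpen_lt (by fun_prop) (by fun_prop)

lemma phi_diff : Differentiable ℂ phi := by
  have := (Complex.differentiableOn_dslope (f := Complex.exp) (s := univ) (c := 0)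
    univ_mem).2 Complex.differentiable_exp.differentiableOn
  exact differentiableOn_univ.1 this

lemma phi_of_ne {w : ℂ} (hw : w ≠ 0) : phi w = (Complex.exp w - 1) / w := by
  rw [phi, dslope_of_ne _ hw, slope_def_field]; simp

lemma phi_zero : phi 0 = 1 := by
  simp [phi]

lemma exp_ne_one {w : ℂ} (hs : w ∈ strip) (hw : w ≠ 0) : Complex.exp w ≠ 1 := by
  intro h
  obtain ⟨n, hn⟩ := Complex.exp_eq_one_iff.1 h
  have him : w.im = n * (2 * Real.pi) := by rw [hn]; simp
  have hs' : |w.im| < 2 * Real.pi := hs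
  rw [him, abs_mul, abs_of_pos (by positivity : (0:ℝ) < 2 * Real.pi)] at hs'
  have h1 : |(n:ℝ)| < 1 := by
    by_contra hc
    push Not at hc
    nlinarith [Real.pi_pos]
  have h2 : n = 0 := by
    have : |n| < 1 := by exact_mod_cast h1
    exact Int.abs_lt_one_iff.1 this
  apply hw
  rw [hn, h2]; simp

lemma phi_ne_zero {w : ℂ} (hs : w ∈ strip) : phi w ≠ 0 := by
  by_cases hw : w = 0
  · rw [hw, phi_zero]; exact one_ne_zero
  · rw [phi_of_ne hw]
    exact div_ne_zero (sub_ne_zero.2 (exp_ne_one hs hw)) hw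

lemma H_diff : DifferentiableOn ℂ H strip := by
  have h : DifferentiableOn ℂ (fun w => Complex.exp w / phi w) strip :=
    Complex.differentiable_exp.differentiableOn.div phi_diff.differentiableOn
      (fun w hw => phi_ne_zero hw)
  exact h.neg.cexp

lemma H_of_ne {w : ℂ} (hw : w ≠ 0) :
    H w = Complex.exp (-(w * Complex.exp w / (Complex.exp w - 1))) := by
  rw [H, phi_of_ne hw, div_div_eq_mul_div, mul_comm w]

lemma H_zero : H 0 = Complex.exp (-1) := by simp [H, phi_zero]

lemma Lp_re : Tendsto Complex.re Lp atTop := tendsto_comap.mono_left inf_le_left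
lemma Lm_re : Tendsto Complex.re Lm atBot := tendsto_comap.mono_left inf_le_left
lemma Lp_im : ∀ᶠ w in Lp, |w.im| ≤ Real.pi := mem_inf_of_right (mem_principal_self _)
lemma Lm_im : ∀ᶠ w in Lm, |w.im| ≤ Real.pi := mem_inf_of_right (mem_principal_self _)

lemma Lp_exp : Tendsto (fun w => Complex.exp (-w)) Lp (𝓝 0) := by
  rw [tendsto_zero_iff_norm_tendsto_zero]
  simp only [Complex.norm_exp, Complex.neg_re]
  exact Real.tendsto_exp_neg_atTop_nhds_zero.comp Lp_re

lemma Lm_exp : Tendsto (fun w => Complex.exp w) Lm (𝓝 0) := by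
  rw [tendsto_zero_iff_norm_tendsto_zero]
  simp only [Complex.norm_exp]
  exact Real.tendsto_exp_atBot.comp Lm_re

lemma aux_real : Tendsto (fun r : ℝ => (|r| + Real.pi) * Real.exp (-r)) atTop (𝓝 0) := by
  have h1 := Real.tendsto_pow_mul_exp_neg_atTop_nhds_zero 1
  have h2 := Real.tendsto_exp_neg_atTop_nhds_zero.const_mul Real.pi
  have h3 := h1.add h2
  simp only [mul_zero, add_zero] at h3
  refine h3.congr' ?_
  filter_upwards [eventually_ge_atTop 0] with r hr
  rw [abs_of_nonneg hr]; ring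

lemma norm_le_of_im {w : ℂ} (h : |w.im| ≤ Real.pi) : ‖w‖ ≤ |w.re| + Real.pi :=
  (Complex.norm_le_abs_re_add_abs_im w).trans (by linarith)

lemma Lp_mul_exp : Tendsto (fun w => w * Complex.exp (-w)) Lp (𝓝 0) := by
  refine squeeze_zero_norm' ?_ (aux_real.comp Lp_re)
  filter_upwards [Lp_im] with w hw
  rw [norm_mul, Complex.norm_exp, Complex.neg_re]
  exact mul_le_mul_of_nonneg_right (norm_le_of_im hw) (Real.exp_pos _).le

lemma Lm_mul_exp : Tendsto (fun w => w * Complex.exp w) Lm (𝓝 0) := by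
  refine squeeze_zero_norm' ?_ (aux_real.comp (tendsto_neg_atBot_atTop.comp Lm_re))
  filter_upwards [Lm_im] with w hw
  simp only [Function.comp, abs_neg, neg_neg]
  rw [norm_mul, Complex.norm_exp]
  exact mul_le_mul_of_nonneg_right (norm_le_of_im hw) (Real.exp_pos _).le

lemma Lp_H : Tendsto H Lp (𝓝 0) := by
  have h1 : Tendsto (fun w => w * Complex.exp (-w) / (1 - Complex.exp (-w))) Lp (𝓝 0) := by
    have := Lp_mul_exp.div (tendsto_const_nhds (x := (1:ℂ)).sub Lp_exp) (by simp)
    simpa [Pi.div_def] using this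
  have h2 : Tendsto (fun w : ℂ => w.re + (w * Complex.exp (-w) / (1 - Complex.exp (-w))).re)
      Lp atTop := by
    refine Lp_re.atTop_add (C := 0) ?_
    exact (Complex.continuous_re.tendsto 0).comp h1
  rw [tendsto_zero_iff_norm_tendsto_zero]
  refine (Real.tendsto_exp_neg_atTop_nhds_zero.comp h2).congr' ?_
  filter_upwards [Lp_re.eventually_gt_atTop 0] with w hw
  have hw0 : w ≠ 0 := by rintro rfl; simp at hw
  have he : Complex.exp w - 1 ≠ 0 := by
    intro h
    have h3 := congrArg norm (sub_eq_zero.1 h)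
    rw [Complex.norm_exp, norm_one, Real.exp_eq_one_iff] at h3
    exact hw.ne' h3
  rw [H_of_ne hw0, Complex.norm_exp]
  simp only [Function.comp]
  rw [← Complex.add_re, ← Complex.neg_re]
  congr 3
  have he2 := Complex.exp_ne_zero w
  rw [Complex.exp_neg]
  have he3 : 1 - (Complex.exp w)⁻¹ ≠ 0 := by
    intro h
    apply he
    have : Complex.exp w * (1 - (Complex.exp w)⁻¹) = 0 := by rw [h, mul_zero]
    rwa [mul_sub, mul_one, mul_inv_cancel₀ he2] at this
  have : w * (Complex.exp w)⁻¹ / (1 - (Complex.exp w)⁻¹) = w / (Complex.exp w - 1) := by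
    rw [div_eq_div_iff he3 he]
    field_simp
  rw [this]
  field_simp
  ring

lemma Lm_H : Tendsto H Lm (𝓝 1) := by
  have h1 : Tendsto (fun w => Complex.exp (-(w * Complex.exp w / (Complex.exp w - 1)))) Lm (𝓝 1) := by
    have := Lm_mul_exp.div (Lm_exp.sub (tendsto_const_nhds (x := (1:ℂ)))) (by simp)
    have := (Complex.continuous_exp.tendsto _).comp this.neg
    simpa [Function.comp_def] using this
  refine h1.congr' ?_
  filter_upwards [Lm_re.eventually_lt_atBot 0] with w hw
  have hw0 : w ≠ 0 := by rintro rfl; simp at hw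
  rw [H_of_ne hw0]

lemma mem_strip (x y : ℝ) (hy : |y| ≤ Real.pi) : (x + y * I : ℂ) ∈ strip := by
  have := Real.pi_pos
  simp only [strip, mem_ofPred_eq]
  simp
  linarith

lemma vert {F : ℂ → ℂ} (hF : DifferentiableOn ℂ F strip) {a : ℂ} {L : Filter ℂ} {u : ℝ → ℝ}
    (hL : Tendsto F L (𝓝 a))
    (hu : ∀ s ∈ L, ∀ᶠ R in atTop, ∀ y : ℝ, |y| ≤ Real.pi → ((u R : ℝ) + y * I : ℂ) ∈ s) :
    Tendsto (fun R : ℝ => ∫ y in (-Real.pi)..Real.pi, F ((u R : ℝ) + y * I)) atTop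
      (𝓝 (2 * Real.pi * a)) := by
  have hpi := Real.pi_pos
  have hI : ∀ y ∈ uIoc (-Real.pi) Real.pi, |y| ≤ Real.pi := by
    intro y hy
    rw [uIoc_of_le (by linarith)] at hy
    exact abs_le.2 ⟨hy.1.le, hy.2⟩
  have key := intervalIntegral.tendsto_integral_filter_of_dominated_convergence
    (μ := volume) (a := -Real.pi) (b := Real.pi) (l := atTop)
    (F := fun (R : ℝ) (y : ℝ) => F ((u R : ℝ) + y * I)) (f := fun _ => a)
    (bound := fun _ => ‖a‖ + 1) ?_ ?_ ?_ ?_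
  · rw [intervalIntegral.integral_const] at key
    convert key using 2
    rw [Complex.real_smul]; push_cast; ring
  · refine Eventually.of_forall fun R => ?_
    refine ContinuousOn.aestronglyMeasurable ?_ measurableSet_uIoc
    refine hF.continuousOn.comp (by fun_prop) ?_
    intro y hy
    exact mem_strip _ _ (hI y hy)
  · have := hL.norm.eventually_lt_const (show ‖a‖ < ‖a‖ + 1 by linarith)
    filter_upwards [hu _ this] with R hR
    refine Eventually.of_forall fun y hy => ?_
    exact le_of_lt (hR y (hI y hy))
  · exact intervalIntegrable_const
  · refine Eventually.of_forall fun y hy => ?_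
    refine hL.comp ?_
    intro s hs
    rw [mem_map]
    filter_upwards [hu s hs] with R hR
    exact hR y (hI y hy)

lemma Lp_u (s : Set ℂ) (hs : s ∈ Lp) :
    ∀ᶠ R : ℝ in atTop, ∀ y : ℝ, |y| ≤ Real.pi → ((R : ℝ) + y * I : ℂ) ∈ s := by
  rw [Lp, mem_inf_principal, mem_comap] at hs
  obtain ⟨t, ht, h⟩ := hs
  filter_upwards [ht] with R hR y hy
  refine h (?_ : (R + y * I : ℂ).re ∈ t) ?_
  · simpa using hR
  · simpa using hy

lemma Lm_u (s : Set ℂ) (hs : s ∈ Lm) :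
    ∀ᶠ R : ℝ in atTop, ∀ y : ℝ, |y| ≤ Real.pi → (((-R : ℝ) : ℂ) + y * I : ℂ) ∈ s := by
  rw [Lm, mem_inf_principal, mem_comap] at hs
  obtain ⟨t, ht, h⟩ := hs
  filter_upwards [tendsto_neg_atTop_atBot ht] with R hR y hy
  refine h (?_ : (((-R : ℝ) : ℂ) + y * I : ℂ).re ∈ t) ?_
  · simpa using hR
  · simpa using hy

lemma contour {F : ℂ → ℂ} (hF : DifferentiableOn ℂ F strip) {a b : ℝ}
    (ha : Tendsto F Lp (𝓝 a)) (hb : Tendsto F Lm (𝓝 b)) {g : ℝ → ℝ} (hg : Continuous g)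
    (hg0 : ∀ x, 0 ≤ g x)
    (hgF : ∀ x : ℝ, F (x + (-Real.pi : ℝ) * I) - F (x + Real.pi * I) = 2 * Real.pi * I * g x) :
    ∫ x, g x = b - a := by
  have hpi := Real.pi_pos
  have hcont : ∀ y : ℝ, |y| ≤ Real.pi → Continuous (fun x : ℝ => F (x + y * I)) := by
    intro y hy
    exact hF.continuousOn.comp_continuous (by fun_prop) (fun x => mem_strip _ _ hy)
  have hR : ∀ R : ℝ, ((∫ x in (-R)..R, g x : ℝ) : ℂ) =
      (2 * Real.pi : ℂ)⁻¹ * ((∫ y in (-Real.pi)..Real.pi, F ((-R : ℝ) + y * I))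
        - ∫ y in (-Real.pi)..Real.pi, F ((R : ℝ) + y * I)) := by
    intro R
    have h := Complex.integral_boundary_rect_eq_zero_of_differentiableOn F
      ((-R : ℝ) + (-Real.pi : ℝ) * I) ((R : ℝ) + (Real.pi : ℝ) * I) (hF.mono ?_)
    · have e1 : (((-R : ℝ) : ℂ) + (-Real.pi : ℝ) * I).re = -R := by simp
      have e2 : (((-R : ℝ) : ℂ) + (-Real.pi : ℝ) * I).im = -Real.pi := by simp
      have e3 : (((R : ℝ) : ℂ) + (Real.pi : ℝ) * I).re = R := by simp
      have e4 : (((R : ℝ) : ℂ) + (Real.pi : ℝ) * I).im = Real.pi := by simp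
      rw [e1, e2, e3, e4] at h
      rw [← intervalIntegral.integral_sub
        ((hcont _ (by rw [abs_neg, abs_of_pos hpi])).intervalIntegrable _ _)
        ((hcont _ (by rw [abs_of_pos hpi])).intervalIntegrable _ _)] at h
      simp only [hgF] at h
      rw [intervalIntegral.integral_const_mul, intervalIntegral.integral_ofReal] at h
      simp only [smul_eq_mul] at h
      have hpc : (Real.pi : ℂ) ≠ 0 := by exact_mod_cast hpi.ne'
      have hI := Complex.I_ne_zero
      rw [eq_inv_mul_iff_mul_eq₀ (by simpa using hpc)]
      apply mul_left_cancel₀ hI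
      linear_combination h
    · intro w hw
      rw [Complex.mem_reProdIm] at hw
      have := hw.2
      simp only [Complex.add_im, Complex.ofReal_im, Complex.mul_im, Complex.ofReal_re,
        Complex.I_re, Complex.I_im, mul_one, mul_zero, zero_add, add_zero] at this
      rw [uIcc_of_le (by linarith)] at this
      have h2 : |w.im| ≤ Real.pi := abs_le.2 this
      simp only [strip, mem_ofPred_eq]
      linarith
  have hlim : Tendsto (fun R : ℝ => ∫ x in (-R)..R, g x) atTop (𝓝 (b - a)) := by
    have h := ((vert hF hb (u := fun R => -R) Lm_u).sub
      (vert hF ha (u := fun R => R) Lp_u)).const_mul ((2 * Real.pi : ℂ)⁻¹)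
    simp only [← hR] at h
    have hpc : (Real.pi : ℂ) ≠ 0 := by exact_mod_cast hpi.ne'
    have e : (2 * Real.pi : ℂ)⁻¹ * (2 * Real.pi * b - 2 * Real.pi * a) = ((b - a : ℝ) : ℂ) := by
      push_cast; field_simp
    rw [e] at h
    have := (Complex.continuous_re.tendsto _).comp h
    simpa [Function.comp_def] using this
  have hint : Integrable g := by
    refine integrable_of_intervalIntegral_norm_tendsto (b - a) (a := fun R : ℝ => -R)
      (b := fun R : ℝ => R) (l := atTop) (μ := volume)
      (fun R => ?_) tendsto_neg_atTop_atBot tendsto_id ?_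
    · exact (hg.integrableOn_Icc).mono_set Ioc_subset_Icc_self
    · simpa only [Real.norm_of_nonneg (hg0 _)] using hlim
  exact tendsto_nhds_unique
    (intervalIntegral_tendsto_integral hint tendsto_neg_atTop_atBot tendsto_id) hlim

noncomputable def p (l x : ℝ) : ℝ :=
  (1 / Real.pi) * Real.sin (Real.pi * x / (1 + x)) * x ^ (-(x / (1 + x))) / (1 + l * x)

noncomputable def g (l x : ℝ) : ℝ := Real.exp (-x) * p l (Real.exp (-x))

lemma change (l : ℝ) : ∫ x in Ioi (0:ℝ), p l x = ∫ x, g l x := by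
  have h := integral_image_eq_integral_abs_deriv_smul (s := univ)
    (f := fun x : ℝ => Real.exp (-x)) (f' := fun x => -Real.exp (-x)) MeasurableSet.univ
    (fun x _ => by
      have := (hasDerivAt_neg x).exp
      simpa using this)
    (by intro x _ y _ hxy; simpa using hxy) (p l)
  have him : (fun x : ℝ => Real.exp (-x)) '' univ = Ioi 0 := by
    ext y
    simp only [image_univ, mem_range, mem_Ioi]
    constructor
    · rintro ⟨x, rfl⟩; exact Real.exp_pos _
    · intro hy; exact ⟨-Real.log y, by rw [neg_neg, Real.exp_log hy]⟩
  rw [him, Measure.restrict_univ] at h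
  rw [h]
  simp [g, abs_of_pos (Real.exp_pos _)]

lemma f_nonneg {x : ℝ} (hx : 0 < x) :
    0 ≤ (1 / Real.pi) * Real.sin (Real.pi * x / (1 + x)) * x ^ (-(x / (1 + x))) := by
  have hpi := Real.pi_pos
  have : 0 ≤ Real.sin (Real.pi * x / (1 + x)) := by
    apply Real.sin_nonneg_of_nonneg_of_le_pi (by positivity)
    rw [div_le_iff₀ (by positivity)]
    nlinarith
  positivity

lemma g_nonneg {l : ℝ} (hl : 0 ≤ l) (x : ℝ) : 0 ≤ g l x := by
  have he := Real.exp_pos (-x)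
  exact mul_nonneg he.le (div_nonneg (f_nonneg he) (by positivity))

lemma g_cont {l : ℝ} (hl : 0 ≤ l) : Continuous (g l) := by
  have he : ∀ x : ℝ, 0 < Real.exp (-x) := fun x => Real.exp_pos _
  have h1 : ∀ x : ℝ, 1 + Real.exp (-x) ≠ 0 := fun x => by have := he x; positivity
  have h2 : ∀ x : ℝ, 1 + l * Real.exp (-x) ≠ 0 := fun x => by have := he x; positivity
  unfold g p
  refine Continuous.mul (by fun_prop) (Continuous.div (Continuous.mul ?_ ?_) (by fun_prop) h2)
  · refine Continuous.mul (by fun_prop) (Real.continuous_sin.comp ?_)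
    exact Continuous.div (by fun_prop) (by fun_prop) h1
  · refine Continuous.rpow (by fun_prop) ?_ (fun x => Or.inl (he x).ne')
    exact (Continuous.div (by fun_prop) (by fun_prop) h1).neg

lemma g_eq {l : ℝ} (hl : 0 ≤ l) (x : ℝ) :
    Real.pi * g l x = Real.exp (-(x * (Real.exp x / (Real.exp x + 1)))) *
      Real.sin (Real.pi * (Real.exp x / (Real.exp x + 1))) * (Real.exp x / (Real.exp x + l)) := by
  have he := Real.exp_pos x
  have hpi := Real.pi_pos
  set s := Real.exp x / (Real.exp x + 1) with hs
  have e1 : Real.exp (-x) / (1 + Real.exp (-x)) = 1 - s := by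
    rw [Real.exp_neg, hs]; field_simp; ring
  have e2 : (1 + l * Real.exp (-x))⁻¹ = Real.exp x / (Real.exp x + l) := by
    rw [Real.exp_neg]; field_simp
  rw [g, p, mul_div_assoc Real.pi, e1, div_eq_mul_inv _ (1 + l * _), e2]
  have e3 : Real.sin (Real.pi * (1 - s)) = Real.sin (Real.pi * s) := by
    rw [mul_sub, mul_one, Real.sin_pi_sub]
  have e4 : Real.exp (-(x * s)) = Real.exp (-x) * Real.exp (-x) ^ (-(1 - s)) := by
    rw [← Real.exp_mul, ← Real.exp_add]; congr 1; ring
  rw [e3, e4]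
  field_simp

lemma exp_top (x : ℝ) (σ : ℝ) (hσ : σ = 1 ∨ σ = -1) :
    Complex.exp (x + (σ * Real.pi : ℝ) * I) = -(Real.exp x : ℂ) := by
  rw [Complex.exp_add, Complex.ofReal_exp]
  rcases hσ with h | h
  · rw [h, one_mul, Complex.exp_pi_mul_I]; ring
  · rw [h, neg_one_mul, Complex.ofReal_neg, neg_mul, Complex.exp_neg, Complex.exp_pi_mul_I]
    norm_num

lemma H_top (x : ℝ) (σ : ℝ) (hσ : σ = 1 ∨ σ = -1) :
    H (x + (σ * Real.pi : ℝ) * I) =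
      Complex.exp (-((x + (σ * Real.pi : ℝ) * I) * (Real.exp x / (Real.exp x + 1) : ℝ))) := by
  have hpi := Real.pi_pos
  have hne : (x + (σ * Real.pi : ℝ) * I : ℂ) ≠ 0 := by
    intro h
    have := congrArg Complex.im h
    simp at this
    rcases hσ with h | h <;> simp [h, hpi.ne'] at this
  rw [H_of_ne hne]
  have hexp := exp_top x σ hσ
  rw [hexp]
  have : (Real.exp x : ℂ) + 1 ≠ 0 := by
    have : Real.exp x + 1 ≠ 0 := by positivity
    exact_mod_cast this
  congr 2
  rw [mul_div_assoc]
  congr 1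
  push_cast at *
  rw [← neg_div_neg_eq]
  congr 1 <;> ring

lemma H_jump (x : ℝ) :
    H (x + (-Real.pi : ℝ) * I) - H (x + Real.pi * I) =
      2 * I * (Real.exp (-(x * (Real.exp x / (Real.exp x + 1)))) *
      Real.sin (Real.pi * (Real.exp x / (Real.exp x + 1))) : ℝ) := by
  have h1 := H_top x 1 (Or.inl rfl)
  have h2 := H_top x (-1) (Or.inr rfl)
  simp only [one_mul, neg_one_mul] at h1 h2
  rw [h1, h2]
  set s := Real.exp x / (Real.exp x + 1) with hs
  have e1 : -((x + (Real.pi : ℝ) * I : ℂ) * s) = (-(x * s) : ℝ) + (-(Real.pi * s : ℝ) : ℂ) * I := by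
    push_cast; ring
  have e2 : -((x + (-Real.pi : ℝ) * I : ℂ) * s) = (-(x * s) : ℝ) + ((Real.pi * s : ℝ) : ℂ) * I := by
    push_cast; ring
  rw [e1, e2, Complex.exp_add, Complex.exp_add, Complex.exp_mul_I, Complex.exp_mul_I,
    Complex.cos_neg, Complex.sin_neg]
  push_cast
  ring

lemma main_zero : ∫ x in Ioi (0:ℝ), p 0 x = 1 := by
  rw [change]
  have := contour (F := H) H_diff (a := 0) (b := 1) (by simpa using Lp_H) (by simpa using Lm_H)
    (g_cont le_rfl) (g_nonneg le_rfl) ?_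
  · simpa using this
  · intro x
    have h := g_eq (l := 0) le_rfl x
    rw [add_zero, div_self (Real.exp_pos x).ne', mul_one] at h
    rw [H_jump, ← h]
    push_cast; ring

noncomputable def F (w0 w : ℂ) : ℂ :=
  Complex.exp w * dslope H w0 w / (Complex.exp w0 * phi (w - w0))

lemma F_diff (t : ℝ) : DifferentiableOn ℂ (F t) strip := by
  have hmem : (t : ℂ) ∈ strip := by simp [strip, Real.pi_pos]
  have h := (Complex.differentiableOn_dslope (f := H) (s := strip) (c := (t : ℂ))
    (strip_open.mem_nhds hmem)).2 H_diff
  unfold F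
  refine DifferentiableOn.div (Complex.differentiable_exp.differentiableOn.mul h) ?_ ?_
  · have : Differentiable ℂ (fun w => phi (w - t)) := phi_diff.comp (by fun_prop)
    exact (this.const_mul _).differentiableOn
  · intro w hw
    refine mul_ne_zero (Complex.exp_ne_zero _) (phi_ne_zero ?_)
    simpa [strip] using hw

lemma F_of_ne {w0 w : ℂ} (h : w ≠ w0) :
    F w0 w = (H w - H w0) * Complex.exp w / (Complex.exp w - Complex.exp w0) := by
  have h' : w - w0 ≠ 0 := sub_ne_zero.2 h
  rw [F, dslope_of_ne _ h, slope_def_field, phi_of_ne h', Complex.exp_sub]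
  have := Complex.exp_ne_zero w0
  have e : Complex.exp w0 * ((Complex.exp w / Complex.exp w0 - 1) / (w - w0)) =
    (Complex.exp w - Complex.exp w0) / (w - w0) := by field_simp
  rw [e, ← mul_div_assoc, div_div_div_cancel_right₀ h', mul_comm]

lemma F_Lp (t : ℝ) : Tendsto (F t) Lp (𝓝 (-H t)) := by
  have h1 : Tendsto (fun w => (H w - H t) / (1 - Complex.exp t * Complex.exp (-w))) Lp
      (𝓝 (-H t)) := by
    have := (Lp_H.sub_const (H t)).div
      (tendsto_const_nhds (x := (1:ℂ)).sub (Lp_exp.const_mul (Complex.exp t))) (by simp)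
    simpa [Pi.div_def] using this
  refine h1.congr' ?_
  filter_upwards [Lp_re.eventually_gt_atTop t] with w hw
  have hw0 : w ≠ t := by rintro rfl; simp at hw
  rw [F_of_ne hw0]
  have e := Complex.exp_ne_zero w
  rw [mul_div_assoc, div_eq_mul_inv (H w - H t)]
  congr 1
  rw [← inv_div, sub_div, div_self e, Complex.exp_neg]; rfl

lemma F_Lm (t : ℝ) : Tendsto (F t) Lm (𝓝 0) := by
  have h1 : Tendsto (fun w => (H w - H t) * Complex.exp w / (Complex.exp w - Complex.exp t)) Lm
      (𝓝 0) := by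
    have := ((Lm_H.sub_const (H t)).mul Lm_exp).div
      (Lm_exp.sub_const (Complex.exp t)) (by simp)
    simpa [Pi.div_def] using this
  refine h1.congr' ?_
  filter_upwards [Lm_re.eventually_lt_atBot t] with w hw
  have hw0 : w ≠ t := by rintro rfl; simp at hw
  rw [F_of_ne hw0]

lemma F_top (t x : ℝ) (σ : ℝ) (hσ : σ = 1 ∨ σ = -1) :
    F t (x + (σ * Real.pi : ℝ) * I) = (H (x + (σ * Real.pi : ℝ) * I) - H t) *
      (Real.exp x / (Real.exp x + Real.exp t) : ℝ) := by
  have hpi := Real.pi_pos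
  have hne : (x + (σ * Real.pi : ℝ) * I : ℂ) ≠ t := by
    intro h
    have := congrArg Complex.im h
    simp at this
    rcases hσ with h | h <;> simp [h, hpi.ne'] at this
  rw [F_of_ne hne, exp_top x σ hσ, mul_div_assoc]
  congr 1
  push_cast
  rw [← neg_div_neg_eq]
  congr 1 <;> ring

lemma main_pos (t r : ℝ) (hr : H t = r) : ∫ x in Ioi (0:ℝ), p (Real.exp t) x = r := by
  rw [change]
  have := contour (F := F t) (F_diff t) (a := -r) (b := 0)
    (by rw [Complex.ofReal_neg, ← hr]; exact F_Lp t)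
    (by simpa using F_Lm t)
    (g_cont (Real.exp_pos t).le) (g_nonneg (Real.exp_pos t).le) ?_
  · simpa using this
  · intro x
    have h := g_eq (l := Real.exp t) (Real.exp_pos t).le x
    have h1 := F_top t x 1 (Or.inl rfl)
    have h2 := F_top t x (-1) (Or.inr rfl)
    simp only [one_mul, neg_one_mul] at h1 h2
    rw [h1, h2, ← sub_mul, sub_sub_sub_cancel_right, H_jump, mul_assoc (2 * I), ← Complex.ofReal_mul, ← h]
    push_cast; ring

end MeanRatio

/-- Proposition 4.1: the function
`f(x) = (1/π)·sin(πx/(1+x))·x^{-x/(1+x)}` is a probability density on `(0,∞)`,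
`∫₀^∞ f(x)/(1+x) dx = e^{-1}`, and for `λ > 0`, `λ ≠ 1`,
`∫₀^∞ f(x)/(1+λx) dx = λ^{-λ/(λ-1)}`. -/
theorem density_of_mean_functional_ratio_exponentials :
    (∀ x ∈ Set.Ioi (0:ℝ),
      0 ≤ (1 / Real.pi) * Real.sin (Real.pi * x / (1 + x)) * x ^ (-(x / (1 + x)))) ∧
    (∫ x in Set.Ioi (0:ℝ),
      (1 / Real.pi) * Real.sin (Real.pi * x / (1 + x)) * x ^ (-(x / (1 + x))) = 1) ∧
    (∫ x in Set.Ioi (0:ℝ),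
      (1 / Real.pi) * Real.sin (Real.pi * x / (1 + x)) * x ^ (-(x / (1 + x))) / (1 + x)
        = Real.exp (-1)) ∧
    (∀ l : ℝ, 0 < l → l ≠ 1 →
      ∫ x in Set.Ioi (0:ℝ),
        (1 / Real.pi) * Real.sin (Real.pi * x / (1 + x)) * x ^ (-(x / (1 + x))) / (1 + l * x)
          = l ^ (-(l / (l - 1)))) := by
  refine ⟨fun x hx => MeanRatio.f_nonneg hx, ?_, ?_, ?_⟩
  · have h := MeanRatio.main_zero
    simpa [MeanRatio.p] using h
  · have h := MeanRatio.main_pos 0 (Real.exp (-1)) (by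
      rw [Complex.ofReal_zero, MeanRatio.H_zero]; push_cast; rfl)
    simpa only [MeanRatio.p, Real.exp_zero, one_mul] using h
  · intro l hl hl1
    have hlog : Real.log l ≠ 0 := by
      intro h0
      rcases Real.log_eq_zero.1 h0 with h | h | h
      · exact hl.ne' h
      · exact hl1 h
      · linarith
    have h := MeanRatio.main_pos (Real.log l) (l ^ (-(l / (l - 1)))) (by
      rw [MeanRatio.H_of_ne (by exact_mod_cast hlog), ← Complex.ofReal_exp, Real.exp_log hl,
        Real.rpow_def_of_pos hl]
      push_cast
      congr 1
      ring)
    rw [Real.exp_log hl] at h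
    exact h
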